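/- arXiv:2305.10671 — 2 statements merged into one kernel-verified Lean document; each statement's English description precedes it below -/
import Mathlib

section
/- Let $n$ be a positive integer, $q = 2^n$, and $d = q^3 + q^2 + q - 1$. For any $b \in \mu_{q+1} \setminus \{1\}$ (i.e., $b^{q+1} = 1$, $b \neq 1$), the equation $x^d + (x+1)^d = b$ has exactly $q^2 - q$ solutions $x \in \mathbb{F}_{q^4}$. -/
/-!
Let `σ x = x ^ q` and `e = (b + 1)⁻¹`; the condition `b ^ (q + 1) = 1` becomes `σ e = e + 1`, so
`e ∈ 𝔽_{q²} \ 𝔽_q`. Since `x * x ^ d = σ x * σ² x * σ³ x`, clearing denominators turns the equation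
into `x² + x = e * (T * x + S)`, where `T, S ∈ 𝔽_q` are the first and third elementary symmetric
functions of the conjugates of `x`. Conversely, if `x ∉ 𝔽_{q²}` satisfies such a relation for some
`T, S ∈ 𝔽_q`, then `x` and `σ² x` are the two roots of a quadratic over `𝔽_{q²}`, and Vieta's
formulas for it and for its image under `σ` force `T` and `S` to be those symmetric functions.

Each of the `q²` quadratics has two distinct roots in `𝔽_{q⁴}`. Among these `2 * q²` incidences, `0`
and `1` account for `q` each, the other elements of `𝔽_q` for none, and each element `x` of
`𝔽_{q²} \ 𝔽_q` for exactly one, because `𝔽_{q²} = 𝔽_q * x + 𝔽_q`. The remaining `q² - q` incidences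
belong to the solutions.
-/

open Polynomial

section FrobeniusFixedField

variable (K : Type*) [Field K] (p n : ℕ) [Fact p.Prime] [CharP K p]

/-- The subfield `{x | x ^ p ^ n = x}` of a field of characteristic `p`; inside a field with
`p ^ m` elements, `n ∣ m`, it is the copy of `𝔽_{pⁿ}`. -/
def frobeniusFixedField : Subfield K :=
  (iterateFrobenius K p n).eqLocusField (RingHom.id K)

variable {K p n}

theorem mem_frobeniusFixedField {x : K} : x ∈ frobeniusFixedField K p n ↔ x ^ p ^ n = x :=
  Iff.rfl

theorem mem_frobeniusFixedField_add_self {x : K} :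
    x ∈ frobeniusFixedField K p (n + n) ↔
      iterateFrobenius K p n (iterateFrobenius K p n x) = x := by
  rw [← iterateFrobenius_add_apply]
  rfl

theorem frobeniusFixedField_le_of_dvd {m : ℕ} (h : n ∣ m) :
    frobeniusFixedField K p n ≤ frobeniusFixedField K p m := by
  obtain ⟨k, rfl⟩ := h
  intro x hx
  rw [mem_frobeniusFixedField, ← iterateFrobenius_def, iterateFrobenius_mul_apply]
  exact Function.iterate_fixed hx k

theorem natCard_frobeniusFixedField {m : ℕ} (hn : n ≠ 0) (hnm : n ∣ m)
    (hK : Nat.card K = p ^ m) : Nat.card (frobeniusFixedField K p n) = p ^ n := by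
  have hne {k : ℕ} (hk : k ≠ 0) : (X ^ p ^ k - X : K[X]) ≠ 0 :=
    FiniteField.X_pow_card_pow_sub_X_ne_zero K hk (Fact.out : p.Prime).one_lt
  have hm : m ≠ 0 := by
    rintro rfl
    have : Finite K := Nat.finite_of_card_ne_zero (by simp [hK])
    exact (Finite.one_lt_card (α := K)).ne' (by simpa using hK)
  have hsep : (X ^ p ^ n - X : K[X]).Separable := galois_poly_separable p _ (dvd_pow_self p hn)
  have hsplits : ((X ^ p ^ n - X : K[X]).map (algebraMap K K)).Splits := by
    rw [Algebra.algebraMap_self, Polynomial.map_id]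
    refine Splits.of_dvd ?_ (hne hm) (dvd_pow_pow_sub_self_of_dvd hnm)
    exact hK ▸ Polynomial.splits_X_pow_nat_card_sub_X
  have hroots : (frobeniusFixedField K p n : Set K) = (X ^ p ^ n - X : K[X]).rootSet K := by
    ext x
    simp [mem_rootSet, hne hn, mem_frobeniusFixedField, sub_eq_zero]
  have hcard := card_rootSet_eq_natDegree hsep hsplits
  rw [FiniteField.X_pow_card_pow_sub_X_natDegree_eq K hn (Fact.out : p.Prime).one_lt] at hcard
  rw [← hcard, ← Nat.card_eq_fintype_card]
  exact congrArg (fun s : Set K => Nat.card s) hroots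

end FrobeniusFixedField

section Quadratic

theorem sq_add_self_eq_zero_iff {K : Type*} [CommRing K] [NoZeroDivisors K] {x : K} :
    x ^ 2 + x = 0 ↔ x = 0 ∨ x = -1 := by
  rw [show x ^ 2 + x = x * (x + 1) by ring, mul_eq_zero, add_eq_zero_iff_eq_neg]

theorem splits_map_of_natDegree_eq_two {k K : Type*} [Field k] [Field K] [Algebra k K] [Finite K]
    (hkK : 2 ∣ Module.finrank k K) {f : k[X]} (hf : f.natDegree = 2) :
    (f.map (algebraMap k K)).Splits := by
  have : Finite k := Finite.of_injective _ (algebraMap k K).injective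
  by_cases hirr : Irreducible f
  · have hdvd : f.map (algebraMap k K) ∣ X ^ Nat.card K - X := by
      have h := Polynomial.map_dvd (algebraMap k K)
        (hirr.natDegree_dvd_iff_dvd_X_pow_card_pow_sub_X.1 (hf ▸ hkK))
      simpa [← Module.natCard_eq_pow_finrank] using h
    exact Splits.of_dvd splits_X_pow_nat_card_sub_X
      (FiniteField.X_pow_card_sub_X_ne_zero K Finite.one_lt_card) hdvd
  · obtain ⟨x, hx⟩ : ∃ x, f.IsRoot x := by
      contrapose! hirr
      exact irreducible_of_degree_le_three_of_not_isRoot (by simp [hf]) hirr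
    exact (Splits.of_natDegree_eq_two hf hx).map _

theorem ncard_monic_quadratic_eq_two {K : Type*} [CommRing K] [IsDomain K] [CharP K 2] {u v r : K}
    (hu : u ≠ 0) (hr : r ^ 2 + u * r + v = 0) : {x : K | x ^ 2 + u * x + v = 0}.ncard = 2 := by
  have h2 : (2 : K) = 0 := CharTwo.two_eq_zero
  have hroots : {x : K | x ^ 2 + u * x + v = 0} = {r, r + u} := by
    ext x
    have hfactor : x ^ 2 + u * x + v = (x - r) * (x - (r + u)) := by
      linear_combination hr + (r * x - r ^ 2 - r * u + u * x) * h2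
    simp [hfactor, sub_eq_zero]
  rw [hroots, Set.ncard_pair (by simpa using hu)]

theorem ncard_monic_quadratic_eq_two_of_mem {K : Type*} [Field K] [Finite K] [CharP K 2]
    {E : Subfield K} (hK : Nat.card K = Nat.card E ^ 2) {u v : K} (huE : u ∈ E) (hvE : v ∈ E)
    (hu : u ≠ 0) : {x : K | x ^ 2 + u * x + v = 0}.ncard = 2 := by
  have hrank : Module.finrank E K = 2 :=
    Nat.pow_right_injective Finite.one_lt_card
      ((Module.natCard_eq_pow_finrank (K := E)).symm.trans hK)
  let f : E[X] := C 1 * X ^ 2 + C ⟨u, huE⟩ * X + C ⟨v, hvE⟩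
  obtain ⟨r, hfr⟩ := (splits_map_of_natDegree_eq_two hrank.symm.dvd
    (natDegree_quadratic one_ne_zero : f.natDegree = 2)).exists_eval_eq_zero
      (by rw [degree_map, degree_quadratic one_ne_zero]; decide)
  have hr : r ^ 2 + algebraMap E K ⟨u, huE⟩ * r + algebraMap E K ⟨v, hvE⟩ = 0 := by
    simpa [f] using hfr
  exact ncard_monic_quadratic_eq_two hu hr

end Quadratic

section Lines

variable {K : Type*} [Field K] {F E : Subfield K} {x : K}

theorem injective_mul_add_of_notMem (hx : x ∉ F) :
    Function.Injective fun p : F × F => (p.1 * x + p.2 : K) := by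
  rintro ⟨T, S⟩ ⟨T', S'⟩ (h : T * x + S = T' * x + S')
  have hT : T = T' := by
    by_contra hne
    have hne' : (T - T' : K) ≠ 0 := sub_ne_zero.2 (Subtype.coe_injective.ne hne)
    have hxF : x = (S' - S) / (T - T') := by
      rw [eq_div_iff hne']
      linear_combination h
    exact hx (hxF ▸ div_mem (sub_mem S'.2 S.2) (sub_mem T.2 T'.2))
  subst hT
  simpa using h

theorem exists_mul_add_eq_of_mem [Finite K] (hFE : F ≤ E) (hE : Nat.card E = Nat.card F ^ 2)
    (hxE : x ∈ E) (hxF : x ∉ F) {y : K} (hy : y ∈ E) : ∃ p : F × F, (p.1 * x + p.2 : K) = y := by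
  let f (p : F × F) : E := ⟨p.1 * x + p.2, add_mem (mul_mem (hFE p.1.2) hxE) (hFE p.2.2)⟩
  have hf : Function.Bijective f := (Nat.bijective_iff_injective_and_card f).2
    ⟨fun _ _ h => injective_mul_add_of_notMem hxF (congrArg Subtype.val h),
      by rw [Nat.card_prod, hE, sq]⟩
  obtain ⟨p, hp⟩ := hf.2 ⟨y, hy⟩
  exact ⟨p, congrArg Subtype.val hp⟩

theorem ncard_mul_add_eq_zero_of_mem (hx : x ∈ F) :
    {p : F × F | (p.1 * x + p.2 : K) = 0}.ncard = Nat.card F := by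
  have hgraph : {p : F × F | (p.1 * x + p.2 : K) = 0} =
      Set.range fun T : F => (T, -(T * (⟨x, hx⟩ : F))) := by
    ext ⟨T, S⟩
    simp only [Set.mem_ofPred_eq, Set.mem_range, Prod.mk.injEq, exists_eq_left]
    rw [← neg_eq_iff_add_eq_zero, Subtype.ext_iff]
    rfl
  rw [hgraph, Set.ncard_range_of_injective fun _ _ h => congrArg Prod.fst h]

end Lines

section DoubleCounting

theorem sum_ncard_eq_sum_ncard {α β : Type*} [Fintype α] [Fintype β] (r : α → β → Prop) :
    ∑ a, {b | r a b}.ncard = ∑ b, {a | r a b}.ncard := by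
  classical
  simpa [Set.ncard_eq_toFinset_card', Finset.bipartiteAbove, Finset.bipartiteBelow] using
    Finset.sum_card_bipartiteAbove_eq_sum_card_bipartiteBelow (s := .univ) (t := .univ) r

theorem sum_indicator_const_eq_ncard_mul {α : Type*} [Fintype α] (s : Set α) (c : ℕ) :
    ∑ a, s.indicator (fun _ => c) a = s.ncard * c := by
  classical
  simp [Set.indicator_apply, Finset.sum_ite, Set.ncard_eq_toFinset_card']

end DoubleCounting

section Pencil

variable {K : Type*} [Field K] {F E : Subfield K} {e x : K}

/-- The pairs `(T, S)` over the subfield `F` for which `x` is a root of the quadratic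
`X ^ 2 + X - e * (T * X + S)`, the members of a pencil of quadratics that pass through `x`. -/
def pencilThrough (F : Subfield K) (e x : K) : Set (F × F) :=
  {p | x ^ 2 + x = e * (p.1 * x + p.2)}

theorem subsingleton_pencilThrough (he : e ≠ 0) (hx : x ∉ F) :
    (pencilThrough F e x).Subsingleton := fun _ hp _ hp' =>
  injective_mul_add_of_notMem hx (mul_left_cancel₀ he (hp.symm.trans hp'))

theorem nonempty_pencilThrough_of_mem [Finite K] (hFE : F ≤ E)
    (hE : Nat.card E = Nat.card F ^ 2) (heE : e ∈ E) (he : e ≠ 0) (hxE : x ∈ E) (hxF : x ∉ F) :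
    (pencilThrough F e x).Nonempty := by
  obtain ⟨p, hp⟩ := exists_mul_add_eq_of_mem hFE hE hxE hxF
    (mul_mem (inv_mem heE) (add_mem (pow_mem hxE 2) hxE))
  exact ⟨p, by rw [pencilThrough, Set.mem_ofPred_eq, hp, mul_inv_cancel_left₀ he]⟩

theorem mem_pencilThrough_iff_of_mem (he : e ∉ F) (hx : x ∈ F) {p : F × F} :
    p ∈ pencilThrough F e x ↔ x ^ 2 + x = 0 ∧ (p.1 * x + p.2 : K) = 0 := by
  rw [pencilThrough, Set.mem_ofPred_eq]
  refine ⟨fun hp => ?_, fun ⟨hx0, hp0⟩ => by rw [hx0, hp0, mul_zero]⟩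
  suffices hp0 : (p.1 * x + p.2 : K) = 0 by
    rw [hp0, mul_zero] at hp
    exact ⟨hp, hp0⟩
  by_contra hp0
  have heF : e = (x ^ 2 + x) / (p.1 * x + p.2) := eq_div_of_mul_eq hp0 hp.symm
  exact he (heF ▸ div_mem (add_mem (pow_mem hx 2) hx) (add_mem (mul_mem p.1.2 hx) p.2.2))

theorem ncard_pencilThrough_of_mem (he : e ∉ F) (hx : x ∈ F) :
    (pencilThrough F e x).ncard = {x : K | x ^ 2 + x = 0}.indicator (fun _ => Nat.card F) x := by
  have hset : pencilThrough F e x = {p | x ^ 2 + x = 0 ∧ (p.1 * x + p.2 : K) = 0} :=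
    Set.ext fun _ => mem_pencilThrough_iff_of_mem he hx
  by_cases hx0 : x ^ 2 + x = 0 <;> simp [hset, hx0, ncard_mul_add_eq_zero_of_mem hx]

theorem ncard_pencilThrough_of_notMem (he : e ≠ 0) (hx : x ∉ F) :
    (pencilThrough F e x).ncard =
      {x | (pencilThrough F e x).Nonempty}.indicator (fun _ => 1) x := by
  obtain hempty | ⟨p, hp⟩ := (subsingleton_pencilThrough he hx).eq_empty_or_singleton
  · simp [hempty]
  · simp [hp]

theorem ncard_pencilThrough [Finite K] (hFE : F ≤ E) (hE : Nat.card E = Nat.card F ^ 2)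
    (heE : e ∈ E) (heF : e ∉ F) (x : K) :
    (pencilThrough F e x).ncard =
      {x : K | x ^ 2 + x = 0}.indicator (fun _ => Nat.card F) x +
        (E \ F : Set K).indicator (fun _ => 1) x +
        {x | x ∉ E ∧ (pencilThrough F e x).Nonempty}.indicator (fun _ => 1) x := by
  have he : e ≠ 0 := fun h => heF (h ▸ zero_mem F)
  by_cases hxF : x ∈ F
  · simp [ncard_pencilThrough_of_mem heF hxF, hxF, hFE hxF]
  have hx0 : x ^ 2 + x ≠ 0 := fun h => by
    obtain rfl | rfl := sq_add_self_eq_zero_iff.1 h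
    · exact hxF (zero_mem F)
    · exact hxF (neg_mem (one_mem F))
  rw [ncard_pencilThrough_of_notMem he hxF]
  by_cases hxE : x ∈ E
  · simp [hx0, hxF, hxE, nonempty_pencilThrough_of_mem hFE hE heE he hxE hxF]
  · classical simp [hx0, hxE, Set.indicator_apply]

theorem ncard_setOf_mem_pencilThrough [Finite K] [CharP K 2] (hK : Nat.card K = Nat.card E ^ 2)
    (hFE : F ≤ E) (heE : e ∈ E) (heF : e ∉ F) (p : F × F) :
    {x | p ∈ pencilThrough F e x}.ncard = 2 := by
  have hlinear : 1 + e * p.1 ≠ 0 := fun h => by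
    have hp : (p.1 : K) ≠ 0 := fun h0 => by simp [h0] at h
    have he : e = -1 / p.1 := eq_div_of_mul_eq hp (eq_neg_of_add_eq_zero_right h)
    exact heF (he ▸ div_mem (neg_mem (one_mem F)) p.1.2)
  have hset : {x | p ∈ pencilThrough F e x} =
      {x | x ^ 2 + (1 + e * p.1) * x + e * p.2 = 0} := by
    ext x
    rw [Set.mem_ofPred_eq, Set.mem_ofPred_eq, pencilThrough, Set.mem_ofPred_eq,
      ← CharTwo.add_eq_zero]
    ring_nf
  rw [hset, ncard_monic_quadratic_eq_two_of_mem hK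
    (add_mem (one_mem E) (mul_mem heE (hFE p.1.2))) (mul_mem heE (hFE p.2.2)) hlinear]

theorem sum_ncard_pencilThrough [Fintype K] [CharP K 2] (hK : Nat.card K = Nat.card E ^ 2)
    (hFE : F ≤ E) (heE : e ∈ E) (heF : e ∉ F) :
    ∑ x, (pencilThrough F e x).ncard = 2 * Nat.card F ^ 2 := by
  have : Fintype F := Fintype.ofFinite F
  calc ∑ x, (pencilThrough F e x).ncard
      = ∑ p : F × F, {x | p ∈ pencilThrough F e x}.ncard :=
        sum_ncard_eq_sum_ncard fun x p => p ∈ pencilThrough F e x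
    _ = 2 * Nat.card F ^ 2 := by
        simp only [ncard_setOf_mem_pencilThrough hK hFE heE heF, Finset.sum_const,
          Finset.card_univ, Fintype.card_prod, Nat.card_eq_fintype_card, smul_eq_mul]
        ring

theorem ncard_notMem_nonempty_pencilThrough [Finite K] [CharP K 2] (hFE : F ≤ E)
    (hE : Nat.card E = Nat.card F ^ 2) (hK : Nat.card K = Nat.card E ^ 2) (heE : e ∈ E)
    (heF : e ∉ F) :
    {x | x ∉ E ∧ (pencilThrough F e x).Nonempty}.ncard = Nat.card F ^ 2 - Nat.card F := by
  have := Fintype.ofFinite K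
  have hcount := sum_ncard_pencilThrough hK hFE heE heF
  simp only [ncard_pencilThrough hFE hE heE heF, Finset.sum_add_distrib,
    sum_indicator_const_eq_ncard_mul] at hcount
  have hzero : {x : K | x ^ 2 + x = 0}.ncard = 2 := by
    simpa using ncard_monic_quadratic_eq_two (K := K) (u := 1) (v := 0) (r := 0) one_ne_zero
      (by ring)
  have hdiff : (E \ F : Set K).ncard = Nat.card F ^ 2 - Nat.card F := by
    rw [Set.ncard_sdiff hFE, ← hE]
    rfl
  have hle : Nat.card F ≤ Nat.card F ^ 2 := Nat.le_self_pow two_ne_zero _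
  rw [hzero, hdiff] at hcount
  omega

end Pencil

section Conjugates

variable {R : Type*} [CommRing R] (σ : R →+* R)

/-- The sum of the conjugates of `x` under an endomorphism `σ` with `σ ^ 4 = 1`, such as the
`q`-Frobenius of `𝔽_{q⁴}`. -/
def conjSum (x : R) : R :=
  x + σ x + σ (σ x) + σ (σ (σ x))

/-- The third elementary symmetric function of the conjugates of `x` under an endomorphism `σ` with
`σ ^ 4 = 1`, such as the `q`-Frobenius of `𝔽_{q⁴}`. -/
def conjEsymmThree (x : R) : R :=
  x * σ x * σ (σ x) + x * σ x * σ (σ (σ x)) + x * σ (σ x) * σ (σ (σ x)) +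
    σ x * σ (σ x) * σ (σ (σ x))

variable {σ} {x : R}

theorem map_conjSum (hx : σ (σ (σ (σ x))) = x) : σ (conjSum σ x) = conjSum σ x := by
  simp only [conjSum, map_add, hx]
  ring

theorem map_conjEsymmThree (hx : σ (σ (σ (σ x))) = x) :
    σ (conjEsymmThree σ x) = conjEsymmThree σ x := by
  simp only [conjEsymmThree, map_add, map_mul, hx]
  ring

variable {K : Type*} [Field K] [CharP K 2] {σ : K →+* K} {e x : K}

theorem eq_conjSum_and_eq_conjEsymmThree (he : σ e = e + 1) (hx : σ (σ x) ≠ x) {T S : K}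
    (hT : σ T = T) (hS : σ S = S) (h : x ^ 2 + x = e * (T * x + S)) :
    T = conjSum σ x ∧ S = conjEsymmThree σ x := by
  have h2 : (2 : K) = 0 := CharTwo.two_eq_zero
  have hee : σ (σ e) = e := by
    simp only [he, map_add, map_one]
    linear_combination h2
  have hconj : σ (σ x) ^ 2 + σ (σ x) = e * (T * σ (σ x) + S) := by
    simpa [hee, hT, hS] using congrArg (σ ∘ σ) h
  have hsum : x + σ (σ x) = 1 + e * T := by
    refine mul_left_cancel₀ (sub_ne_zero.2 hx) ?_
    linear_combination hconj - h + (x - σ (σ x)) * h2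
  have hprod : x * σ (σ x) = e * S := by
    linear_combination x * hsum + h - (x ^ 2 - e * T * x) * h2
  have hsum' : σ x + σ (σ (σ x)) = 1 + (e + 1) * T := by
    simpa [he, hT] using congrArg σ hsum
  have hprod' : σ x * σ (σ (σ x)) = (e + 1) * S := by
    simpa [he, hS] using congrArg σ hprod
  constructor
  · rw [conjSum]
    linear_combination -hsum - hsum' - (1 + e * T) * h2
  · rw [conjEsymmThree]
    linear_combination -(σ x + σ (σ (σ x))) * hprod - (x + σ (σ x)) * hprod' - e * S * hsum' -
      (e + 1) * S * hsum - (e * S + S * e * (e + 1) * T) * h2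

theorem pow_add_add_one_pow_eq_iff_conj {d : ℕ}
    (hd : ∀ y : K, y * y ^ d = σ y * σ (σ y) * σ (σ (σ y))) (he : e ≠ 0) (hx : x ^ 2 + x ≠ 0) :
    x ^ d + (x + 1) ^ d = 1 + e⁻¹ ↔ x ^ 2 + x = e * (conjSum σ x * x + conjEsymmThree σ x) := by
  have h2 : (2 : K) = 0 := CharTwo.two_eq_zero
  have hclear : (x ^ 2 + x) * e * (x ^ d + (x + 1) ^ d - (1 + e⁻¹)) =
      e * (conjSum σ x * x + conjEsymmThree σ x) - (x ^ 2 + x) := by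
    have hd1 := hd (x + 1)
    simp only [map_add, map_one] at hd1
    rw [conjSum, conjEsymmThree]
    linear_combination e * (x + 1) * hd x + e * x * hd1 - (x ^ 2 + x) * mul_inv_cancel₀ he
      + e * (x * σ x * σ (σ x) * σ (σ (σ x)) - x ^ 2) * h2
  have hne : (x ^ 2 + x) * e ≠ 0 := mul_ne_zero hx he
  rw [← sub_eq_zero, ← mul_right_inj' hne, hclear, mul_zero, sub_eq_zero, eq_comm]

theorem pow_add_add_one_pow_eq_iff {d : ℕ} (hσ : ∀ y, σ (σ (σ (σ y))) = y) (hd0 : d ≠ 0)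
    (hd : ∀ y : K, y * y ^ d = σ y * σ (σ y) * σ (σ (σ y))) (he : σ e = e + 1) :
    x ^ d + (x + 1) ^ d = 1 + e⁻¹ ↔ σ (σ x) ≠ x ∧
      ∃ T S, σ T = T ∧ σ S = S ∧ x ^ 2 + x = e * (T * x + S) := by
  have h2 : (2 : K) = 0 := CharTwo.two_eq_zero
  have he0 : e ≠ 0 := by
    rintro rfl
    simp at he
  have hx0 (h : x ^ 2 + x = 0) : σ (σ x) = x ∧ x ^ d + (x + 1) ^ d = 1 := by
    obtain rfl | rfl := sq_add_self_eq_zero_iff.1 h <;>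
      simp [hd0, CharTwo.neg_eq, CharTwo.add_self_eq_zero]
  constructor
  · intro h
    have hx : x ^ 2 + x ≠ 0 := fun h0 => he0 (by simpa [h] using (hx0 h0).2)
    rw [pow_add_add_one_pow_eq_iff_conj hd he0 hx] at h
    refine ⟨fun hfix => hx ?_, _, _, map_conjSum (hσ x), map_conjEsymmThree (hσ x), h⟩
    rw [h, conjSum, conjEsymmThree, hfix]
    linear_combination e * (x + σ x) * x * (1 + σ x) * h2
  · rintro ⟨hx, T, S, hT, hS, h⟩
    obtain ⟨rfl, rfl⟩ := eq_conjSum_and_eq_conjEsymmThree he hx hT hS h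
    exact (pow_add_add_one_pow_eq_iff_conj hd he0 fun h0 => hx (hx0 h0).1).2 h

theorem map_inv_add_one_eq {b : K} (hb : σ b * b = 1) (hb1 : b ≠ 1) :
    σ (b + 1)⁻¹ = (b + 1)⁻¹ + 1 := by
  have hc : b + 1 ≠ 0 := fun h => hb1 (CharTwo.add_eq_zero.1 h)
  rw [map_inv₀, map_add, map_one]
  refine inv_eq_of_mul_eq_one_right ?_
  field_simp
  linear_combination hb + (σ b + 1) * CharTwo.two_eq_zero (R := K)

end Conjugates

theorem setOf_pow_add_add_one_pow_eq {K : Type*} [Field K] [Fintype K] [CharP K 2] {n d : ℕ}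
    {b : K} (hK : Fintype.card K = (2 ^ n) ^ 4)
    (hd : d = (2 ^ n) ^ 3 + (2 ^ n) ^ 2 + 2 ^ n - 1)
    (he : iterateFrobenius K 2 n (b + 1)⁻¹ = (b + 1)⁻¹ + 1) :
    {x : K | x ^ d + (x + 1) ^ d = b} = {x | x ∉ frobeniusFixedField K 2 (n + n) ∧
      (pencilThrough (frobeniusFixedField K 2 n) (b + 1)⁻¹ x).Nonempty} := by
  let σ := iterateFrobenius K 2 n
  have hσ (y : K) : σ (σ (σ (σ y))) = y := by
    simp only [σ, iterateFrobenius_def, ← pow_mul]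
    convert FiniteField.pow_card y using 2
    rw [hK]
    ring
  have hd1 : d + 1 = (2 ^ n) ^ 3 + (2 ^ n) ^ 2 + 2 ^ n := by
    have := Nat.two_pow_pos n
    lia
  have hd0 : d ≠ 0 := by
    have := Nat.two_pow_pos n
    have := pow_pos this 2
    lia
  have hconj (y : K) : y * y ^ d = σ y * σ (σ y) * σ (σ (σ y)) := by
    simp only [σ, iterateFrobenius_def, ← pow_mul, ← pow_add, ← pow_succ', hd1]
    ring
  have hb : 1 + ((b + 1)⁻¹)⁻¹ = b := by
    rw [inv_inv]
    linear_combination CharTwo.two_eq_zero (R := K)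
  ext x
  have hiff := pow_add_add_one_pow_eq_iff (x := x) hσ hd0 hconj he
  rw [hb] at hiff
  rw [Set.mem_ofPred_eq, hiff, Set.mem_ofPred_eq, mem_frobeniusFixedField_add_self]
  refine and_congr_right fun _ => ⟨?_, ?_⟩
  · rintro ⟨T, S, hT, hS, h⟩
    exact ⟨(⟨T, hT⟩, ⟨S, hS⟩), h⟩
  · rintro ⟨⟨T, S⟩, h⟩
    exact ⟨T, S, T.2, S.2, h⟩

/-- For `b ∈ μ_{q+1} \ {1}` the equation `x^d + (x+1)^d = b`, `d = q³+q²+q-1`,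
has exactly `q² - q` solutions in `𝔽_{q⁴}`. -/
theorem stmt11 (n : ℕ) (hn : 0 < n) (q : ℕ) (hq : q = 2 ^ n)
    (K : Type*) [Field K] [Fintype K] (hK : Fintype.card K = q ^ 4)
    (d : ℕ) (hd : d = q ^ 3 + q ^ 2 + q - 1)
    (b : K) (hb : b ^ (q + 1) = 1) (hb1 : b ≠ 1) :
    {x : K | x ^ d + (x + 1) ^ d = b}.ncard = q ^ 2 - q := by
  subst hq hd
  have : CharP K 2 := charP_of_card_eq_prime_pow (f := n * 4) (by rw [hK, pow_mul])
  let F := frobeniusFixedField K 2 n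
  let E := frobeniusFixedField K 2 (n + n)
  have hK' : Nat.card K = 2 ^ (n * 4) := by rw [Nat.card_eq_fintype_card, hK, pow_mul]
  have hF : Nat.card F = 2 ^ n := natCard_frobeniusFixedField hn.ne' (dvd_mul_right n 4) hK'
  have hE : Nat.card E = 2 ^ (n + n) :=
    natCard_frobeniusFixedField (by lia) ⟨2, by ring⟩ hK'
  have he : iterateFrobenius K 2 n (b + 1)⁻¹ = (b + 1)⁻¹ + 1 :=
    map_inv_add_one_eq (by rwa [iterateFrobenius_def, ← pow_succ]) hb1
  have heE : (b + 1)⁻¹ ∈ E := mem_frobeniusFixedField_add_self.2 <| by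
    rw [he, map_add, map_one, he, CharTwo.add_cancel_right]
  have heF : (b + 1)⁻¹ ∉ F := fun h => by simpa using he.symm.trans h
  have hFE : F ≤ E := frobeniusFixedField_le_of_dvd ⟨2, by ring⟩
  rw [setOf_pow_add_add_one_pow_eq hK rfl he,
    ncard_notMem_nonempty_pencilThrough hFE (by rw [hE, hF]; ring) (by rw [hK', hE]; ring) heE heF,
    hF]
end

section
/- Let $n$ be a positive integer, $q = 2^n$, and $d = q^3 + q^2 + q - 1$. The number of $b \in \mathbb{F}_{q^4}$ for which the equation $x^d + (x+1)^d = b$ has no solution in $\mathbb{F}_{q^4}$ is $(\frac{1}{2}q^3 - 1)(q+1)$. -/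
/-!
Write `σ` for `x ↦ x ^ q`, `N` and `T` for the norm and trace to the fixed field of `σ ^ 2`, and
`θ x = N x / σ (N x)`. Then `x ^ d = (σ ^ 2 x) ^ 2 / θ x`, so `Δ = x ^ d + (x + 1) ^ d` and
`σ ^ 2 Δ` are both explicit in `x`, `σ ^ 2 x`, `θ x` and `θ (x + 1)`. With `s = θ x + θ (x + 1)`
this gives `T Δ = T x ^ 2 * σ s` and `(N Δ + 1) * s = T Δ + σ (T Δ)`.

If `σ ^ 2 x ≠ x` and `s ≠ 0`, these two equations recover `s` and `T x` from `Δ`, and then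
`{θ x, θ (x + 1)}`, since the product of the two is `s / σ s`. This in turn fixes `N x`, so `x` is
determined up to `x ↦ x + 1`; the other root `σ ^ 2 x` is excluded because `σ ^ 2 Δ ≠ Δ`. All
remaining `x`, of which there are `q ^ 3`, have `Δ * σ Δ = 1`. Each of the `q + 1` solutions `b` of
`b * σ b = 1` is attained: Artin–Schreier theory provides an `x` with `σ ^ 2 x = x + 1` and
`θ x = b⁻¹`. Hence `Δ` takes `q + 1 + (q ^ 4 - q ^ 3) / 2` values.
-/

theorem ncard_eq_mul_ncard_image {α β : Type*} {s : Set α} (hs : s.Finite) {f : α → β} {k : ℕ}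
    (h : ∀ a ∈ s, {b ∈ s | f b = f a}.ncard = k) : s.ncard = (f '' s).ncard * k := by
  classical
  lift s to Finset α using hs
  rw [Set.ncard_coe_finset, ← Finset.coe_image, Set.ncard_coe_finset,
    Finset.card_eq_sum_card_image f s]
  refine Finset.sum_const_nat fun b hb => ?_
  obtain ⟨a, ha, rfl⟩ := Finset.mem_image.1 hb
  rw [← h a ha, ← Set.ncard_coe_finset, Finset.coe_filter]
  rfl

section PowerCount

variable {K : Type*} [Field K] [Finite K]

theorem ncard_pow_eq_one {k : ℕ} (hk : k ∣ Nat.card K - 1) : {x : K | x ^ k = 1}.ncard = k := by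
  have hk0 : k ≠ 0 := by
    rintro rfl
    have := Finite.one_lt_card (α := K)
    have := zero_dvd_iff.1 hk
    omega
  have himage : {x : K | x ^ k = 1} = Units.val '' ((powMonoidHom k : Kˣ →* Kˣ).ker : Set Kˣ) := by
    ext x
    constructor
    · intro hx
      exact ⟨Units.ofPowEqOne x k hx hk0, Units.pow_ofPowEqOne hx hk0, rfl⟩
    · rintro ⟨u, hu, rfl⟩
      simpa [← Units.val_pow_eq_pow_val] using hu
  rw [himage, Set.ncard_image_of_injective _ Units.val_injective, ← Nat.card_coe_set_eq]
  refine (IsCyclic.card_powMonoidHom_ker _ k).trans ?_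
  rw [Nat.card_units, Nat.gcd_eq_right hk]

theorem ncard_pow_eq_self {m : ℕ} (hm : m - 1 ∣ Nat.card K - 1) :
    {x : K | x ^ m = x}.ncard = m := by
  obtain ⟨k, rfl⟩ : ∃ k, m = k + 1 + 1 := by
    refine ⟨m - 2, ?_⟩
    by_contra hlt
    rw [show m - 1 = 0 by omega, zero_dvd_iff] at hm
    have := Finite.one_lt_card (α := K)
    omega
  have hinsert : {x : K | x ^ (k + 1 + 1) = x} = insert 0 {x : K | x ^ (k + 1) = 1} := by
    ext x
    by_cases hx : x = 0
    · simp [hx]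
    · simp [hx, pow_succ _ (k + 1)]
  rw [hinsert, Set.ncard_insert_of_notMem (by simp), ncard_pow_eq_one (k := k + 1) hm]

end PowerCount

section ArtinSchreier

/-- The Artin–Schreier map `x ↦ x ^ 2 + x` of a ring of characteristic two. -/
def artinSchreier (K : Type*) [CommRing K] [CharP K 2] : K →+ K :=
  (frobenius K 2 : K →+ K) + AddMonoidHom.id K

variable {K : Type*} [Field K] [CharP K 2]

theorem artinSchreier_apply (x : K) : artinSchreier K x = x ^ 2 + x := rfl

theorem sq_add_self_eq_sq_add_self_iff {x y : K} : y ^ 2 + y = x ^ 2 + x ↔ y = x ∨ y = x + 1 := by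
  have hfactor : y ^ 2 + y + (x ^ 2 + x) = (y + x) * (y + (x + 1)) := by grind
  rw [← CharTwo.add_eq_zero, hfactor, mul_eq_zero, CharTwo.add_eq_zero, CharTwo.add_eq_zero]

theorem index_range_artinSchreier [Finite K] : (artinSchreier K).range.index = 2 := by
  have hker : ((artinSchreier K).ker : Set K) = {0, 1} := by
    ext x
    simpa [artinSchreier_apply] using sq_add_self_eq_sq_add_self_iff (x := 0) (y := x)
  rw [AddSubgroup.index_range, ← Set.ncard_pair (zero_ne_one (α := K)), ← hker]
  rfl

theorem exists_notMem_range_artinSchreier [Finite K] : ∃ t, t ∉ (artinSchreier K).range := by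
  by_contra! h
  have := index_range_artinSchreier (K := K)
  rw [(AddSubgroup.eq_top_iff' _).2 h, AddSubgroup.index_top] at this
  omega

variable {τ : K →+* K}

theorem exists_add_map_eq_one (hτ : ∀ x, τ (τ x) = x) (hne : ∃ x, τ x ≠ x) :
    ∃ z, z + τ z = 1 := by
  obtain ⟨y, hy⟩ := hne
  have ht : y + τ y ≠ 0 := fun h => hy (CharTwo.add_eq_zero.1 h).symm
  refine ⟨y / (y + τ y), ?_⟩
  rw [map_div₀, map_add, hτ, add_comm (τ y), ← add_div, div_self ht]

theorem mem_range_artinSchreier_of_map_eq [Finite K] (hτ : ∀ x, τ (τ x) = x) (hne : ∃ x, τ x ≠ x)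
    {w : K} (hw : τ w = w) : w ∈ (artinSchreier K).range := by
  have hmap : ∀ y ∈ (artinSchreier K).range, τ y ∈ (artinSchreier K).range := by
    rintro _ ⟨x, rfl⟩
    exact ⟨τ x, by simp [artinSchreier_apply]⟩
  obtain ⟨z, hz⟩ := exists_add_map_eq_one hτ hne
  -- `w` is the trace of `w * z`, and the range is a `τ`-stable subgroup of index two.
  have htrace : w = w * z + τ (w * z) := by rw [map_mul, hw, ← mul_add, hz, mul_one]
  rw [htrace, AddSubgroup.add_mem_iff_of_index_two index_range_artinSchreier]
  exact ⟨hmap _, fun h => by simpa [hτ] using hmap _ h⟩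

theorem exists_sq_add_self_eq_mul [Finite K] {σ : K →+* K} (hσ : ∀ x, σ (σ (σ (σ x))) = x)
    (hne : ∃ x, σ (σ x) ≠ x) {p : K} (hp : σ (σ p) = p) (hp' : σ p ≠ p) :
    ∃ k x, σ k = k ∧ σ (σ x) = x + 1 ∧ x ^ 2 + x = k * p := by
  obtain ⟨⟨t, ht⟩, htr⟩ := exists_notMem_range_artinSchreier (K := σ.eqLocusField (RingHom.id K))
  rw [RingHom.mem_eqLocusField, RingHom.id_apply] at ht
  have hp0 : p + σ p ≠ 0 := fun h => hp' (CharTwo.add_eq_zero.1 h).symm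
  have hk : σ (t / (p + σ p)) = t / (p + σ p) := by rw [map_div₀, ht, map_add, hp, add_comm]
  obtain ⟨x, hx⟩ := mem_range_artinSchreier_of_map_eq (τ := σ.comp σ) hσ hne
    (w := t / (p + σ p) * p) (by simp only [RingHom.comp_apply, map_mul, hk, hp])
  rw [artinSchreier_apply] at hx
  have hx1 := congrArg σ hx
  have hx2 := congrArg σ hx1
  simp only [map_mul, map_add, map_pow, hk, hp] at hx1 hx2
  have hσσx := sq_add_self_eq_sq_add_self_iff.1 (hx2.trans hx.symm)
  refine ⟨t / (p + σ p), x, hk, hσσx.resolve_left ?_, hx⟩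
  -- If `σ (σ x) = x`, then `x + σ x` is an Artin–Schreier root of `t` in the fixed field of `σ`.
  intro hfix
  refine htr ⟨⟨x + σ x, by simp [RingHom.mem_eqLocusField, hfix, add_comm]⟩, Subtype.ext ?_⟩
  calc (x + σ x) ^ 2 + (x + σ x) = (x ^ 2 + x) + (σ x ^ 2 + σ x) := by rw [CharTwo.add_sq]; ring
    _ = t := by rw [hx, hx1, ← mul_add, div_mul_cancel₀ _ hp0]

end ArtinSchreier

section PowerMap

variable {K : Type*} [Field K]

/-- The norm of `x` down to the fixed field of `σ ^ 2`, for `σ` of order four. -/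
def relNorm (σ : K →+* K) (x : K) : K := x * σ (σ x)

/-- The trace of `x` down to the fixed field of `σ ^ 2`, for `σ` of order four. -/
def relTrace (σ : K →+* K) (x : K) : K := x + σ (σ x)

/-- The quotient `N / σ N` of the relative norm `N` of `x` by its conjugate; it is `0` at `x = 0`,
by the convention `0 / 0 = 0`. -/
def normRatio (σ : K →+* K) (x : K) : K := relNorm σ x / σ (relNorm σ x)

/-- The sum of the norm ratios of `x` and `x + 1`, the first invariant of `x` that can be read off
from `powerDiff σ x`. -/
def ratioSum (σ : K →+* K) (x : K) : K := normRatio σ x + normRatio σ (x + 1)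

/-- The power map `x ↦ x ^ (q ^ 3 + q ^ 2 + q - 1)`, written through conjugates so that `q` does not
appear: `σ` stands for `x ↦ x ^ q`, and `0 / 0 = 0` gives the value at `0`. -/
def powerMap (σ : K →+* K) (x : K) : K := σ x * σ (σ x) * σ (σ (σ x)) / x

/-- The derivative of the power map in the direction `1`; in characteristic two, `+` is the
difference. -/
def powerDiff (σ : K →+* K) (x : K) : K := powerMap σ x + powerMap σ (x + 1)

/-- The points at which `powerDiff σ` is two-to-one; at all others its value `b` satisfies
`b * σ b = 1`. -/
structure IsGeneric (σ : K →+* K) (x : K) : Prop where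
  map_map_ne : σ (σ x) ≠ x
  normRatio_ne : normRatio σ x ≠ normRatio σ (x + 1)

variable {σ : K →+* K} {x y b : K}

theorem map_map_eq_self_of_mul_map_eq_one (hb : b * σ b = 1) : σ (σ b) = b := by
  have hσb : σ b * σ (σ b) = 1 := by rw [← map_mul, hb, map_one]
  exact mul_left_cancel₀ (right_ne_zero_of_mul_eq_one hb) (by rw [hσb, mul_comm, hb])

theorem map_map_eq_self_of_relNorm_eq_one (hN : relNorm σ b = 1)
    (hT : σ (relTrace σ b) = relTrace σ b) : σ (σ b) = b := by
  -- `{b, σ (σ b)}` and its conjugate under `σ` are the roots of the same quadratic.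
  have hσN := congrArg σ hN
  simp only [relNorm, relTrace, map_mul, map_add, map_one] at hN hσN hT
  have hfactor : (σ b - b) * (σ b - σ (σ b)) = 0 := by
    linear_combination hN - hσN + σ b * hT
  rcases mul_eq_zero.1 hfactor with h | h
  · rw [sub_eq_zero.1 h, sub_eq_zero.1 h]
  · rw [← σ.injective (sub_eq_zero.1 h), ← σ.injective (sub_eq_zero.1 h)]

theorem eq_or_eq_map_map_of_relTrace_eq_of_relNorm_eq (hT : relTrace σ y = relTrace σ x)
    (hN : relNorm σ y = relNorm σ x) : y = x ∨ y = σ (σ x) := by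
  simp only [relTrace, relNorm] at hT hN
  have hfactor : (y - x) * (y - σ (σ x)) = 0 := by linear_combination y * hT - hN
  simpa only [mul_eq_zero, sub_eq_zero] using hfactor

theorem relNorm_ne_zero (hx : x ≠ 0) : relNorm σ x ≠ 0 :=
  mul_ne_zero hx ((map_ne_zero σ).2 ((map_ne_zero σ).2 hx))

theorem normRatio_ne_zero (hx : x ≠ 0) : normRatio σ x ≠ 0 :=
  div_ne_zero (relNorm_ne_zero hx) ((map_ne_zero σ).2 (relNorm_ne_zero hx))

theorem normRatio_mul_map_relNorm (hx : x ≠ 0) :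
    normRatio σ x * σ (relNorm σ x) = relNorm σ x :=
  div_mul_cancel₀ _ ((map_ne_zero σ).2 (relNorm_ne_zero hx))

theorem relNorm_add_one : relNorm σ (x + 1) = relNorm σ x + relTrace σ x + 1 := by
  simp only [relNorm, relTrace, map_add, map_one]
  ring

theorem powerMap_eq_sq_div : powerMap σ x = σ (σ x) ^ 2 / normRatio σ x := by
  rcases eq_or_ne x 0 with rfl | hx
  · simp [powerMap]
  · have hσx := (map_ne_zero σ).2 hx
    have hσσx := (map_ne_zero σ).2 hσx
    simp only [powerMap, normRatio, relNorm, map_mul]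
    field_simp

theorem powerDiff_eq_sq_div_add_sq_div : powerDiff σ x =
    σ (σ x) ^ 2 / normRatio σ x + (σ (σ x) + 1) ^ 2 / normRatio σ (x + 1) := by
  simp only [powerDiff, powerMap_eq_sq_div, map_add, map_one]

theorem map_map_powerDiff : σ (σ (powerDiff σ x)) = powerDiff σ (σ (σ x)) := by
  simp only [powerDiff, powerMap, map_add, map_mul, map_div₀, map_one]

theorem IsGeneric.ne_zero (h : IsGeneric σ x) : x ≠ 0 := by
  rintro rfl
  exact h.map_map_ne (by simp only [map_zero])

theorem IsGeneric.add_one_ne_zero (h : IsGeneric σ x) : x + 1 ≠ 0 := fun hx =>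
  h.map_map_ne (by rw [eq_neg_of_add_eq_zero_left hx, map_neg, map_neg, map_one, map_one])

theorem IsGeneric.relNorm_eq_of_relTrace_eq_of_normRatio_eq (hx : IsGeneric σ x)
    (hy : IsGeneric σ y) (hT : relTrace σ y = relTrace σ x) (h0 : normRatio σ y = normRatio σ x)
    (h1 : normRatio σ (y + 1) = normRatio σ (x + 1)) : relNorm σ y = relNorm σ x := by
  have ex := normRatio_mul_map_relNorm (σ := σ) hx.ne_zero
  have ex1 := normRatio_mul_map_relNorm (σ := σ) hx.add_one_ne_zero
  have ey := normRatio_mul_map_relNorm (σ := σ) hy.ne_zero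
  have ey1 := normRatio_mul_map_relNorm (σ := σ) hy.add_one_ne_zero
  rw [relNorm_add_one, map_add, map_add] at ex1 ey1
  rw [h0] at ey
  rw [h1, hT] at ey1
  have hmul : (normRatio σ x - normRatio σ (x + 1)) * (σ (relNorm σ y) - σ (relNorm σ x)) = 0 := by
    linear_combination ey - ex - ey1 + ex1
  exact σ.injective (sub_eq_zero.1 ((mul_eq_zero.1 hmul).resolve_left
    (sub_ne_zero.2 hx.normRatio_ne)))

section CharTwo

variable [CharP K 2]

theorem IsGeneric.relTrace_ne_zero (h : IsGeneric σ x) : relTrace σ x ≠ 0 := fun h0 =>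
  h.map_map_ne (CharTwo.add_eq_zero.1 h0).symm

theorem IsGeneric.ratioSum_ne_zero (h : IsGeneric σ x) : ratioSum σ x ≠ 0 := fun h0 =>
  h.normRatio_ne (CharTwo.add_eq_zero.1 h0)

theorem powerDiff_add_one : powerDiff σ (x + 1) = powerDiff σ x := by
  rw [powerDiff, CharTwo.add_cancel_right, add_comm, powerDiff]

theorem IsGeneric.add_one (h : IsGeneric σ x) : IsGeneric σ (x + 1) where
  map_map_ne := by simpa only [map_add, map_one, ne_eq, add_left_inj] using h.map_map_ne
  normRatio_ne := by simpa only [CharTwo.add_cancel_right] using h.normRatio_ne.symm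

theorem powerDiff_eq_inv_normRatio (hx : normRatio σ x = normRatio σ (x + 1)) :
    powerDiff σ x = (normRatio σ x)⁻¹ := by
  rw [powerDiff_eq_sq_div_add_sq_div, ← hx, CharTwo.add_sq, ← add_div, CharTwo.add_cancel_left,
    one_pow, one_div]

theorem powerDiff_eq_one_of_map_map_eq (hx : σ (σ x) = x) : powerDiff σ x = 1 := by
  have hpow : ∀ y, σ (σ y) = y → powerMap σ y = σ y ^ 2 := by
    intro y hy
    rcases eq_or_ne y 0 with rfl | hy0
    · simp [powerMap]
    · rw [powerMap, hy]
      field_simp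
  rw [powerDiff, hpow x hx, hpow (x + 1) (by rw [map_add, map_add, hx, map_one, map_one]), map_add,
    map_one, CharTwo.add_sq, CharTwo.add_cancel_left, one_pow]

theorem inv_add_one_add_one_involutive :
    Function.Involutive fun x : K => (x + 1)⁻¹ + 1 := fun x => by
  simp only [CharTwo.add_cancel_right, inv_inv]

theorem not_isGeneric_iff : ¬ IsGeneric σ x ↔
    σ (σ ((x + 1)⁻¹ + 1)) = (x + 1)⁻¹ + 1 ∨
      σ (relNorm σ ((x + 1)⁻¹ + 1)) = relNorm σ ((x + 1)⁻¹ + 1) := by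
  -- In the coordinate `u = x / (x + 1) = (x + 1)⁻¹ + 1`, equality of the two norm ratios says that
  -- `σ` fixes the norm of `u`: each condition becomes a single power equation, easy to count.
  have hfix : σ (σ ((x + 1)⁻¹ + 1)) = (x + 1)⁻¹ + 1 ↔ σ (σ x) = x := by
    simp only [map_add, map_inv₀, map_one, add_left_inj, inv_inj]
  rw [hfix]
  by_cases hx : σ (σ x) = x
  · exact iff_of_true (fun h => h.map_map_ne hx) (Or.inl hx)
  have hx1 : x + 1 ≠ 0 := by
    intro h
    rw [CharTwo.add_eq_zero.1 h] at hx
    exact hx (by simp only [map_one])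
  have hx0 : x ≠ 0 := by
    rintro rfl
    exact hx (by simp only [map_zero])
  have hN : relNorm σ ((x + 1)⁻¹ + 1) = relNorm σ x / relNorm σ (x + 1) := by
    have hu : (x + 1)⁻¹ + 1 = x / (x + 1) := by field_simp; grind
    simp only [hu, relNorm, map_div₀, div_mul_div_comm]
  have hne := relNorm_ne_zero (σ := σ) hx1
  have hratio : σ (relNorm σ x / relNorm σ (x + 1)) = relNorm σ x / relNorm σ (x + 1) ↔
      normRatio σ x = normRatio σ (x + 1) := by
    have hσN := (map_ne_zero σ).2 (relNorm_ne_zero (σ := σ) hx0)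
    have hσN1 := (map_ne_zero σ).2 hne
    rw [map_div₀, normRatio, normRatio, div_eq_div_iff hσN1 hne, div_eq_div_iff hσN hσN1, eq_comm,
      mul_comm (σ (relNorm σ x))]
  rw [hN, hratio, or_iff_right hx, not_iff_comm]
  exact ⟨fun h => ⟨hx, h⟩, fun h => h.normRatio_ne⟩

end CharTwo

section OrderFour

variable (hσ : ∀ x, σ (σ (σ (σ x))) = x)
include hσ

theorem map_map_relNorm : σ (σ (relNorm σ x)) = relNorm σ x := by
  simp only [relNorm, map_mul, hσ, mul_comm]

theorem map_normRatio : σ (normRatio σ x) = (normRatio σ x)⁻¹ := by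
  rw [normRatio, map_div₀, map_map_relNorm hσ, inv_div]

theorem map_ratioSum : σ (ratioSum σ x) = (normRatio σ x)⁻¹ + (normRatio σ (x + 1))⁻¹ := by
  rw [ratioSum, map_add, map_normRatio hσ, map_normRatio hσ]

theorem ratioSum_eq_map_mul (hx : x ≠ 0) (hx1 : x + 1 ≠ 0) :
    ratioSum σ x = σ (ratioSum σ x) * (normRatio σ x * normRatio σ (x + 1)) := by
  have h0 := normRatio_ne_zero (σ := σ) hx
  have h1 := normRatio_ne_zero (σ := σ) hx1
  rw [map_ratioSum hσ, ratioSum]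
  field_simp
  ring

theorem map_map_powerDiff_eq_sq_div_add_sq_div : σ (σ (powerDiff σ x)) =
    x ^ 2 / normRatio σ x + (x + 1) ^ 2 / normRatio σ (x + 1) := by
  simp only [powerDiff_eq_sq_div_add_sq_div, map_add, map_div₀, map_pow, map_one,
    map_normRatio hσ, map_inv₀, hσ, inv_inv]

variable [CharP K 2]

theorem relTrace_powerDiff :
    relTrace σ (powerDiff σ x) = relTrace σ x ^ 2 * σ (ratioSum σ x) := by
  rw [relTrace, map_map_powerDiff_eq_sq_div_add_sq_div hσ, powerDiff_eq_sq_div_add_sq_div,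
    map_ratioSum hσ, relTrace]
  simp only [CharTwo.add_sq, one_pow]
  grind

theorem relNorm_powerDiff_add_one (hx : x ≠ 0) (hx1 : x + 1 ≠ 0) :
    relNorm σ (powerDiff σ x) + 1 = σ (relTrace σ x) ^ 2 +
      relTrace σ x ^ 2 / (normRatio σ x * normRatio σ (x + 1)) := by
  have hX : x * σ (σ x) / normRatio σ x = σ (relNorm σ x) := by
    rw [div_eq_iff (normRatio_ne_zero hx), mul_comm (σ (relNorm σ x)),
      normRatio_mul_map_relNorm hx, relNorm]
  have hY : (x + 1) * (σ (σ x) + 1) / normRatio σ (x + 1) =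
      σ (relNorm σ x) + σ (relTrace σ x) + 1 := by
    have hN : σ (relNorm σ x) + σ (relTrace σ x) + 1 = σ (relNorm σ (x + 1)) := by
      rw [relNorm_add_one, map_add, map_add, map_one]
    rw [hN, div_eq_iff (normRatio_ne_zero hx1), mul_comm (σ (relNorm σ (x + 1))),
      normRatio_mul_map_relNorm hx1, relNorm, map_add, map_add, map_one, map_one]
  have hcross : σ (σ x) ^ 2 * (x + 1) ^ 2 + x ^ 2 * (σ (σ x) + 1) ^ 2 = relTrace σ x ^ 2 := by
    rw [relTrace]
    grind
  rw [relNorm, map_map_powerDiff_eq_sq_div_add_sq_div hσ, powerDiff_eq_sq_div_add_sq_div, ← hcross]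
  calc _ = (x * σ (σ x) / normRatio σ x) ^ 2
        + ((x + 1) * (σ (σ x) + 1) / normRatio σ (x + 1)) ^ 2
        + (σ (σ x) ^ 2 * (x + 1) ^ 2 + x ^ 2 * (σ (σ x) + 1) ^ 2)
          / (normRatio σ x * normRatio σ (x + 1)) + 1 := by ring
    _ = _ := by rw [hX, hY]; simp only [CharTwo.add_sq]; grind

theorem relNorm_powerDiff_add_one_mul_ratioSum (hx : x ≠ 0) (hx1 : x + 1 ≠ 0) :
    (relNorm σ (powerDiff σ x) + 1) * ratioSum σ x =
      relTrace σ (powerDiff σ x) + σ (relTrace σ (powerDiff σ x)) := by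
  have h0 := normRatio_ne_zero (σ := σ) hx
  have h1 := normRatio_ne_zero (σ := σ) hx1
  have hσσ : σ (σ (ratioSum σ x)) = ratioSum σ x := by
    simp only [ratioSum, map_add, map_normRatio hσ, map_inv₀, inv_inv]
  rw [relNorm_powerDiff_add_one hσ hx hx1, relTrace_powerDiff hσ, map_mul, map_pow, hσσ,
    map_ratioSum hσ, ratioSum]
  field_simp
  ring

theorem IsGeneric.map_map_powerDiff_ne (h : IsGeneric σ x) :
    σ (σ (powerDiff σ x)) ≠ powerDiff σ x := by
  intro heq
  have htrace := relTrace_powerDiff hσ (x := x)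
  rw [relTrace, heq, CharTwo.add_self_eq_zero] at htrace
  exact mul_ne_zero (pow_ne_zero 2 h.relTrace_ne_zero) ((map_ne_zero σ).2 h.ratioSum_ne_zero)
    htrace.symm

theorem IsGeneric.relNorm_powerDiff_add_one_ne_zero (h : IsGeneric σ x) :
    relNorm σ (powerDiff σ x) + 1 ≠ 0 := by
  intro h0
  have hT := relNorm_powerDiff_add_one_mul_ratioSum hσ h.ne_zero h.add_one_ne_zero
  rw [h0, zero_mul, eq_comm, CharTwo.add_eq_zero] at hT
  exact h.map_map_powerDiff_ne hσ
    (map_map_eq_self_of_relNorm_eq_one (CharTwo.add_eq_zero.1 h0) hT.symm)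

theorem IsGeneric.ratioSum_eq_of_powerDiff_eq (hx : IsGeneric σ x) (hy : IsGeneric σ y)
    (hxy : powerDiff σ y = powerDiff σ x) : ratioSum σ y = ratioSum σ x := by
  refine mul_left_cancel₀ (hx.relNorm_powerDiff_add_one_ne_zero hσ) ?_
  rw [relNorm_powerDiff_add_one_mul_ratioSum hσ hx.ne_zero hx.add_one_ne_zero, ← hxy,
    relNorm_powerDiff_add_one_mul_ratioSum hσ hy.ne_zero hy.add_one_ne_zero]

theorem IsGeneric.relTrace_eq_of_powerDiff_eq (hx : IsGeneric σ x) (hy : IsGeneric σ y)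
    (hxy : powerDiff σ y = powerDiff σ x) : relTrace σ y = relTrace σ x := by
  have htrace := relTrace_powerDiff hσ (x := y)
  rw [hxy, relTrace_powerDiff hσ, hx.ratioSum_eq_of_powerDiff_eq hσ hy hxy] at htrace
  exact (CharTwo.sq_inj.1 (mul_right_cancel₀ ((map_ne_zero σ).2 hx.ratioSum_ne_zero) htrace)).symm

theorem IsGeneric.normRatio_eq_or_swap (hx : IsGeneric σ x) (hy : IsGeneric σ y)
    (hxy : ratioSum σ y = ratioSum σ x) :
    normRatio σ y = normRatio σ x ∧ normRatio σ (y + 1) = normRatio σ (x + 1) ∨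
      normRatio σ y = normRatio σ (x + 1) ∧ normRatio σ (y + 1) = normRatio σ x := by
  have hprod : normRatio σ y * normRatio σ (y + 1) = normRatio σ x * normRatio σ (x + 1) := by
    refine mul_left_cancel₀ ((map_ne_zero σ).2 hx.ratioSum_ne_zero) ?_
    rw [← ratioSum_eq_map_mul hσ hx.ne_zero hx.add_one_ne_zero, ← hxy,
      ← ratioSum_eq_map_mul hσ hy.ne_zero hy.add_one_ne_zero]
  unfold ratioSum at hxy
  have hfactor : (normRatio σ y - normRatio σ x) * (normRatio σ y - normRatio σ (x + 1)) = 0 := by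
    linear_combination normRatio σ y * hxy - hprod
  rcases mul_eq_zero.1 hfactor with h | h
  · exact Or.inl ⟨sub_eq_zero.1 h, by linear_combination hxy - h⟩
  · exact Or.inr ⟨sub_eq_zero.1 h, by linear_combination hxy - h⟩

theorem IsGeneric.eq_of_normRatio_eq (hx : IsGeneric σ x) (hy : IsGeneric σ y)
    (hxy : powerDiff σ y = powerDiff σ x) (h0 : normRatio σ y = normRatio σ x)
    (h1 : normRatio σ (y + 1) = normRatio σ (x + 1)) : y = x := by
  have hT := hx.relTrace_eq_of_powerDiff_eq hσ hy hxy
  refine (eq_or_eq_map_map_of_relTrace_eq_of_relNorm_eq hT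
    (hx.relNorm_eq_of_relTrace_eq_of_normRatio_eq hy hT h0 h1)).resolve_right fun hyx => ?_
  rw [hyx, ← map_map_powerDiff] at hxy
  exact hx.map_map_powerDiff_ne hσ hxy

theorem IsGeneric.powerDiff_eq_iff (hx : IsGeneric σ x) (hy : IsGeneric σ y) :
    powerDiff σ y = powerDiff σ x ↔ y = x ∨ y = x + 1 := by
  refine ⟨fun hxy => ?_, ?_⟩
  · rcases hx.normRatio_eq_or_swap hσ hy (hx.ratioSum_eq_of_powerDiff_eq hσ hy hxy) with h | h
    · exact Or.inl (hx.eq_of_normRatio_eq hσ hy hxy h.1 h.2)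
    · refine Or.inr (hx.add_one.eq_of_normRatio_eq hσ hy (hxy.trans powerDiff_add_one.symm) h.1 ?_)
      rw [h.2, CharTwo.add_cancel_right]
  · rintro (rfl | rfl)
    exacts [rfl, powerDiff_add_one]

theorem IsGeneric.powerDiff_mul_map_ne_one (h : IsGeneric σ x) :
    powerDiff σ x * σ (powerDiff σ x) ≠ 1 := fun h1 =>
  h.map_map_powerDiff_ne hσ (map_map_eq_self_of_mul_map_eq_one h1)

theorem powerDiff_mul_map_eq_one (hx : ¬ IsGeneric σ x) :
    powerDiff σ x * σ (powerDiff σ x) = 1 := by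
  by_cases hfix : σ (σ x) = x
  · rw [powerDiff_eq_one_of_map_map_eq hfix, map_one, one_mul]
  · have hratio : normRatio σ x = normRatio σ (x + 1) := by
      by_contra h
      exact hx ⟨hfix, h⟩
    have hx0 : x ≠ 0 := by
      rintro rfl
      exact hfix (by simp only [map_zero])
    rw [powerDiff_eq_inv_normRatio hratio, map_inv₀, map_normRatio hσ, inv_inv,
      inv_mul_cancel₀ (normRatio_ne_zero hx0)]

theorem exists_powerDiff_eq_of_mul_map_eq_one [Finite K] (hne : ∃ z, σ (σ z) ≠ z)
    (hb : b * σ b = 1) : ∃ x, powerDiff σ x = b := by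
  rcases eq_or_ne b 1 with rfl | hb1
  · exact ⟨0, powerDiff_eq_one_of_map_map_eq (by simp only [map_zero])⟩
  have hσσb := map_map_eq_self_of_mul_map_eq_one hb
  have hσp : σ (1 + σ b) = b * (1 + σ b) := by
    rw [map_add, map_one, hσσb]
    linear_combination -hb
  have hp0 : 1 + σ b ≠ 0 := by
    intro h
    rw [← CharTwo.add_eq_zero.1 h, mul_one] at hb
    exact hb1 hb
  obtain ⟨k, x, hk, hx, hxk⟩ := exists_sq_add_self_eq_mul hσ hne (p := 1 + σ b)
    (by simp only [map_add, map_one, hσσb])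
    (fun h => hb1 (mul_right_cancel₀ hp0 (by rw [← hσp, h, one_mul])))
  have hN : relNorm σ x = k * (1 + σ b) := by rw [relNorm, hx, ← hxk]; ring
  have hT : relTrace σ x = 1 := by rw [relTrace, hx, CharTwo.add_cancel_left]
  have hN1 : relNorm σ (x + 1) = relNorm σ x := by
    rw [relNorm_add_one, hT, CharTwo.add_cancel_right]
  have hx0 : x ≠ 0 := by
    rintro rfl
    simp at hx
  have hkp : k * (1 + σ b) ≠ 0 := hN ▸ relNorm_ne_zero hx0
  refine ⟨x, ?_⟩
  rw [powerDiff_eq_inv_normRatio (by rw [normRatio, normRatio, hN1]), normRatio, inv_div, hN,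
    map_mul, hk, hσp, mul_left_comm, mul_div_cancel_right₀ _ hkp]

end OrderFour

theorem powerMap_eq_pow {q d : ℕ} (hσ : ∀ x, σ x = x ^ q) (hd : d + 1 = q ^ 3 + q ^ 2 + q)
    (hd0 : d ≠ 0) : powerMap σ x = x ^ d := by
  rcases eq_or_ne x 0 with rfl | hx
  · simp [powerMap, hd0]
  · rw [powerMap, div_eq_iff hx, ← pow_succ, hd, hσ, hσ, hσ]
    ring


end PowerMap

section Counting

theorem pow_four_sub_one (q : ℕ) : q ^ 4 - 1 = (q ^ 2 + 1) * ((q + 1) * (q - 1)) := by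
  have hsq := Nat.sq_sub_sq (q ^ 2) 1
  rwa [← pow_mul, one_pow, ← one_pow 2, Nat.sq_sub_sq q 1] at hsq

theorem one_lt_of_natCard_eq_pow_four {α : Type*} [Finite α] [Nontrivial α] {q : ℕ}
    (h : Nat.card α = q ^ 4) : 1 < q :=
  (Nat.one_lt_pow_iff four_ne_zero).1 (h ▸ Finite.one_lt_card)

variable {K : Type*} [Field K] [Finite K] {σ : K →+* K} {q : ℕ}
  (hK : Nat.card K = q ^ 4) (hσ : ∀ x, σ x = x ^ q)
include hK hσ

theorem map_map_map_map_eq_self (x : K) : σ (σ (σ (σ x))) = x := by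
  have := Fintype.ofFinite K
  have hcard : q * q * q * q = Fintype.card K := by
    rw [← Nat.card_eq_fintype_card, hK]
    ring
  simp only [hσ, ← pow_mul, hcard, FiniteField.pow_card]

theorem ncard_map_eq_self : {x | σ x = x}.ncard = q := by
  simp only [hσ]
  exact ncard_pow_eq_self (hK ▸ Nat.sub_one_dvd_pow_sub_one q 4)

theorem ncard_map_map_eq_self : {x | σ (σ x) = x}.ncard = q ^ 2 := by
  simp only [hσ, ← pow_mul, ← sq]
  exact ncard_pow_eq_self (hK ▸ Nat.pow_sub_one_dvd_pow_sub_one q (by decide))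

theorem exists_map_map_ne : ∃ x, σ (σ x) ≠ x := by
  by_contra! h
  have hcount := ncard_map_map_eq_self hK hσ
  rw [Set.eq_univ_of_forall (s := {x | σ (σ x) = x}) h, Set.ncard_univ, hK] at hcount
  exact absurd (Nat.pow_right_injective (one_lt_of_natCard_eq_pow_four hK) hcount) (by decide)

theorem ncard_map_relNorm_eq :
    {x | σ (relNorm σ x) = relNorm σ x}.ncard = (q ^ 2 + 1) * (q - 1) + 1 := by
  have hq := one_lt_of_natCard_eq_pow_four hK
  have hset : {x | σ (relNorm σ x) = relNorm σ x} = {x | x ^ ((q ^ 2 + 1) * (q - 1) + 1) = x} := by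
    ext x
    rcases eq_or_ne x 0 with rfl | hx
    · simp [relNorm]
    have hN : relNorm σ x = x ^ (q ^ 2 + 1) := by
      rw [relNorm, hσ, hσ]
      ring
    have hσN : σ (relNorm σ x) = x ^ ((q ^ 2 + 1) * (q - 1)) * relNorm σ x := by
      rw [hN, hσ, ← pow_mul, ← pow_add, ← Nat.mul_succ, Nat.succ_eq_add_one,
        Nat.sub_add_cancel hq.le]
    simp only [Set.mem_ofPred_eq, hσN, pow_succ _ (_ * _), mul_eq_right₀ (relNorm_ne_zero hx),
      mul_eq_right₀ hx]
  rw [hset]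
  refine ncard_pow_eq_self ?_
  rw [Nat.add_sub_cancel, hK, pow_four_sub_one]
  exact mul_dvd_mul_left _ (dvd_mul_left _ _)

theorem ncard_mul_map_eq_one : {b | b * σ b = 1}.ncard = q + 1 := by
  simp only [hσ, ← pow_succ']
  refine ncard_pow_eq_one ?_
  rw [hK, pow_four_sub_one]
  exact dvd_mul_of_dvd_right (dvd_mul_right _ _) _

variable [CharP K 2]

theorem ncard_not_isGeneric : {x | ¬ IsGeneric σ x}.ncard = q ^ 3 := by
  have hpreimage : {x | ¬ IsGeneric σ x} = (fun x => (x + 1)⁻¹ + 1) ⁻¹'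
      ({u | σ (σ u) = u} ∪ {u | σ (relNorm σ u) = relNorm σ u}) :=
    Set.ext fun _ => not_isGeneric_iff
  have hinter : {u | σ (σ u) = u} ∩ {u | σ (relNorm σ u) = relNorm σ u} = {u | σ u = u} := by
    ext u
    constructor
    · rintro ⟨hu, hN⟩
      rw [Set.mem_ofPred_eq] at hu hN
      rw [relNorm, hu, map_mul, ← sq, ← sq] at hN
      exact CharTwo.sq_inj.1 hN
    · intro hu
      rw [Set.mem_ofPred_eq] at hu
      constructor <;> simp only [Set.mem_ofPred_eq, relNorm, map_mul, hu]
  have hcount := Set.ncard_union_add_ncard_inter {u | σ (σ u) = u}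
    {u | σ (relNorm σ u) = relNorm σ u}
  rw [hinter, ncard_map_eq_self hK hσ, ncard_map_map_eq_self hK hσ,
    ncard_map_relNorm_eq hK hσ] at hcount
  rw [hpreimage, Set.ncard_preimage_of_injective_subset_range
    inv_add_one_add_one_involutive.injective
    (by simp only [inv_add_one_add_one_involutive.surjective.range_eq, Set.subset_univ])]
  obtain ⟨r, rfl⟩ := Nat.exists_eq_add_of_le (one_lt_of_natCard_eq_pow_four hK).le
  rw [Nat.add_sub_cancel_left] at hcount
  linarith

theorem range_powerDiff :
    Set.range (powerDiff σ) = {b | b * σ b = 1} ∪ powerDiff σ '' {x | IsGeneric σ x} := by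
  have hσ4 := map_map_map_map_eq_self hK hσ
  refine Set.Subset.antisymm ?_ (Set.union_subset ?_ (Set.image_subset_range _ _))
  · rintro _ ⟨x, rfl⟩
    by_cases hx : IsGeneric σ x
    · exact Or.inr ⟨x, hx, rfl⟩
    · exact Or.inl (powerDiff_mul_map_eq_one hσ4 hx)
  · exact fun b hb => exists_powerDiff_eq_of_mul_map_eq_one hσ4 (exists_map_map_ne hK hσ) hb

theorem ncard_isGeneric_eq_ncard_image_mul_two :
    {x | IsGeneric σ x}.ncard = (powerDiff σ '' {x | IsGeneric σ x}).ncard * 2 := by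
  refine ncard_eq_mul_ncard_image (Set.toFinite _) fun x hx => ?_
  have hfibre : {y ∈ {x | IsGeneric σ x} | powerDiff σ y = powerDiff σ x} = {x, x + 1} := by
    ext y
    constructor
    · rintro ⟨hy, hxy⟩
      exact (IsGeneric.powerDiff_eq_iff (map_map_map_map_eq_self hK hσ) hx hy).1 hxy
    · rintro (rfl | rfl)
      exacts [⟨hx, rfl⟩, ⟨IsGeneric.add_one hx, powerDiff_add_one⟩]
  rw [hfibre, Set.ncard_pair (by simp)]

theorem two_mul_ncard_range_powerDiff :
    2 * (Set.range (powerDiff σ)).ncard + q ^ 3 = 2 * (q + 1) + q ^ 4 := by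
  have hdisj : Disjoint {b | b * σ b = 1} (powerDiff σ '' {x | IsGeneric σ x}) := by
    rw [Set.disjoint_right]
    rintro _ ⟨x, hx, rfl⟩
    exact IsGeneric.powerDiff_mul_map_ne_one (map_map_map_map_eq_self hK hσ) hx
  have hcompl := Set.ncard_add_ncard_compl {x | IsGeneric σ x}
  rw [Set.compl_ofPred, ncard_not_isGeneric hK hσ, hK,
    ncard_isGeneric_eq_ncard_image_mul_two hK hσ] at hcompl
  rw [range_powerDiff hK hσ, Set.ncard_union_eq hdisj, ncard_mul_map_eq_one hK hσ]
  linarith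

theorem ncard_compl_range_powerDiff :
    (Set.range (powerDiff σ))ᶜ.ncard = (q ^ 3 / 2 - 1) * (q + 1) := by
  have := Fintype.ofFinite K
  have hq : 2 ∣ q := by
    refine Nat.prime_two.dvd_of_dvd_pow (n := 4) ?_
    rw [← hK, Nat.card_eq_fintype_card, ← CharP.cast_eq_zero_iff K 2, FiniteField.cast_card_eq_zero]
  have hhalf : 2 * (q ^ 3 / 2) = q ^ 3 := Nat.mul_div_cancel' (dvd_pow hq three_ne_zero)
  have hprod : 2 * (q ^ 3 / 2 * (q + 1)) = q ^ 4 + q ^ 3 := by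
    rw [← mul_assoc, hhalf]
    ring
  have hcompl := Set.ncard_add_ncard_compl (Set.range (powerDiff σ))
  have hrange := two_mul_ncard_range_powerDiff hK hσ
  rw [Nat.sub_mul, one_mul]
  omega

end Counting

/-- The number of `b ∈ 𝔽_{q⁴}` for which `x^d + (x+1)^d = b`,
`d = q³+q²+q-1`, has no solution is `(q³/2 - 1)(q+1)`. -/
theorem stmt17 (n : ℕ) (hn : 0 < n) (q : ℕ) (hq : q = 2 ^ n)
    (K : Type*) [Field K] [Fintype K] (hK : Fintype.card K = q ^ 4)
    (d : ℕ) (hd : d = q ^ 3 + q ^ 2 + q - 1) :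
    {b : K | ∀ x : K, x ^ d + (x + 1) ^ d ≠ b}.ncard
      = (q ^ 3 / 2 - 1) * (q + 1) := by
  have hchar : CharP K 2 := charP_of_card_eq_prime_pow (by rw [hK, hq, ← pow_mul])
  rw [← Nat.card_eq_fintype_card] at hK
  have hq1 : 1 < q := one_lt_of_natCard_eq_pow_four hK
  obtain ⟨σ, hσ⟩ : ∃ σ : K →+* K, ∀ x, σ x = x ^ q :=
    ⟨iterateFrobenius K 2 n, fun x => by rw [iterateFrobenius_def, hq]⟩
  have hpow : ∀ x, powerMap σ x = x ^ d := fun x =>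
    powerMap_eq_pow hσ (by omega) (by omega)
  have hset : {b : K | ∀ x : K, x ^ d + (x + 1) ^ d ≠ b} = (Set.range (powerDiff σ))ᶜ := by
    ext b
    simp only [Set.mem_ofPred_eq, Set.mem_compl_iff, Set.mem_range, powerDiff, hpow, not_exists]
  rw [hset, ncard_compl_range_powerDiff hK hσ]
end
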